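/- arXiv:0802.1977 — 9 statements merged into one kernel-verified Lean document; each statement's English description precedes it below -/
import Mathlib

section
/- Let R be an associative unital (possibly noncommutative) ring, let a, b ∈ R, and define the iterated commutators b_0 = b and b_{i+1} = a*b_i − b_i*a. Fix n ≥ 0 and assume b_i*b_j = b_j*b_i for all 0 ≤ i, j ≤ n−1. Then (a+b)^n equals the sum, over all pairs (S₀, π) where S₀ is a subset of {1,…,n} and π is a partition of {1,…,n} ∖ S₀ into nonempty blocks, of the terms (∏_{S ∈ π} b_{|S|−1}) * a^{|S₀|}, where the product over the blocks of π is well-defined because all the factors b_{|S|−1} commute pairwise. -/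
open Finset in
/-- The finset of partitions of `t` into nonempty disjoint blocks. -/
def setParts (t : Finset ℕ) : Finset (Finset (Finset ℕ)) :=
  (t.powerset.powerset).filter (fun P : Finset (Finset ℕ) =>
    (∀ S ∈ P, S.Nonempty) ∧ (∀ S ∈ P, ∀ T ∈ P, S ≠ T → Disjoint S T) ∧ P.biUnion id = t)

theorem mem_setParts {t : Finset ℕ} {P : Finset (Finset ℕ)} :
    P ∈ setParts t ↔ (∀ S ∈ P, S.Nonempty) ∧
      (∀ S ∈ P, ∀ T ∈ P, S ≠ T → Disjoint S T) ∧ P.biUnion id = t := by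
  unfold setParts
  rw [Finset.mem_filter, and_iff_right_iff_imp]
  rintro ⟨_, _, h⟩
  rw [Finset.mem_powerset]
  intro S hS
  rw [Finset.mem_powerset, ← h]
  exact Finset.subset_biUnion_of_mem id hS

/-- Elementwise description of partitions. -/
theorem mem_setParts_iff {t : Finset ℕ} {P : Finset (Finset ℕ)} :
    P ∈ setParts t ↔ (∀ S ∈ P, S.Nonempty) ∧
      (∀ S ∈ P, ∀ T ∈ P, ∀ y, y ∈ S → y ∈ T → S = T) ∧
      (∀ y, y ∈ t ↔ ∃ S ∈ P, y ∈ S) := by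
  rw [mem_setParts]
  refine and_congr_right fun _ => and_congr ?_ ?_
  · constructor
    · intro h S hS T hT y h1 h2
      by_contra hne
      exact Finset.disjoint_left.mp (h S hS T hT hne) h1 h2
    · intro h S hS T hT hne
      rw [Finset.disjoint_left]
      intro y h1 h2
      exact hne (h S hS T hT y h1 h2)
  · rw [Finset.ext_iff]
    simp only [Finset.mem_biUnion, id]
    exact forall_congr' fun y => ⟨fun h => h.symm, fun h => h.symm⟩

/-- The block of `x`. -/
def blk (x : ℕ) (Q : Finset (Finset ℕ)) : Finset ℕ := (Q.filter (x ∈ ·)).biUnion id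

theorem blk_eq {t : Finset ℕ} {Q : Finset (Finset ℕ)} (hQ : Q ∈ setParts t) {x : ℕ}
    {B : Finset ℕ} (hB : B ∈ Q) (hx : x ∈ B) : blk x Q = B := by
  rw [mem_setParts_iff] at hQ
  have : Q.filter (x ∈ ·) = {B} := by
    ext S
    simp only [Finset.mem_filter, Finset.mem_singleton]
    constructor
    · rintro ⟨h1, h2⟩
      exact hQ.2.1 S h1 B hB x h2 hx
    · rintro rfl
      exact ⟨hB, hx⟩
  simp [blk, this]

theorem insert_mem_parts {t : Finset ℕ} {x : ℕ} (hx : x ∉ t) {P : Finset (Finset ℕ)}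
    (hP : P ∈ setParts t) {S : Finset ℕ} (hS : S ∈ P) :
    insert (insert x S) (P.erase S) ∈ setParts (insert x t) := by
  rw [mem_setParts_iff] at hP ⊢
  obtain ⟨h1, h2, h3⟩ := hP
  have hxT : ∀ T ∈ P, x ∉ T := fun T hT h => hx ((h3 x).2 ⟨T, hT, h⟩)
  refine ⟨?_, ?_, ?_⟩
  · intro T hT
    rw [Finset.mem_insert, Finset.mem_erase] at hT
    rcases hT with rfl | hT
    · exact Finset.insert_nonempty _ _
    · exact h1 T hT.2
  · intro T hT U hU y hyT hyU
    rw [Finset.mem_insert, Finset.mem_erase] at hT hU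
    rcases hT with rfl | hT <;> rcases hU with rfl | hU
    · rfl
    · rcases Finset.mem_insert.mp hyT with rfl | h
      · exact absurd hyU (hxT _ hU.2)
      · exact absurd (h2 U hU.2 S hS y hyU h) hU.1
    · rcases Finset.mem_insert.mp hyU with rfl | h
      · exact absurd hyT (hxT _ hT.2)
      · exact absurd (h2 T hT.2 S hS y hyT h) hT.1
    · exact h2 T hT.2 U hU.2 y hyT hyU
  · intro y
    rw [Finset.mem_insert, h3]
    constructor
    · rintro (rfl | ⟨T, hT, hy⟩)
      · exact ⟨_, Finset.mem_insert_self _ _, Finset.mem_insert_self _ _⟩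
      · by_cases h : T = S
        · subst h
          exact ⟨_, Finset.mem_insert_self _ _, Finset.mem_insert_of_mem hy⟩
        · exact ⟨T, Finset.mem_insert_of_mem (Finset.mem_erase.mpr ⟨h, hT⟩), hy⟩
    · rintro ⟨T, hT, hy⟩
      rw [Finset.mem_insert, Finset.mem_erase] at hT
      rcases hT with rfl | hT
      · rcases Finset.mem_insert.mp hy with h | h
        · exact Or.inl h
        · exact Or.inr ⟨S, hS, h⟩
      · exact Or.inr ⟨T, hT.2, hy⟩

theorem erase_mem_parts {t : Finset ℕ} {x : ℕ} (hx : x ∉ t) {Q : Finset (Finset ℕ)}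
    (hQ : Q ∈ setParts (insert x t)) {B : Finset ℕ} (hB : B ∈ Q) (hxB : x ∈ B)
    (hne : {x} ∉ Q) :
    insert (B.erase x) (Q.erase B) ∈ setParts t ∧ B.erase x ∉ Q.erase B := by
  rw [mem_setParts_iff] at hQ ⊢
  obtain ⟨h1, h2, h3⟩ := hQ
  have hBn : (B.erase x).Nonempty := by
    rw [Finset.nonempty_iff_ne_empty]
    intro h
    apply hne
    have : B = {x} := by rw [← Finset.insert_erase hxB, h]; rfl
    rwa [← this]
  have hB' : ∀ T ∈ Q, T ≠ B → ∀ y ∈ T, y ∉ B := fun T hT hne y h h' =>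
    hne (h2 T hT B hB y h h')
  refine ⟨⟨?_, ?_, ?_⟩, ?_⟩
  · intro T hT
    rw [Finset.mem_insert, Finset.mem_erase] at hT
    rcases hT with rfl | hT
    · exact hBn
    · exact h1 T hT.2
  · intro T hT U hU y hyT hyU
    rw [Finset.mem_insert, Finset.mem_erase] at hT hU
    rcases hT with rfl | hT <;> rcases hU with rfl | hU
    · rfl
    · exact absurd (Finset.mem_of_mem_erase hyT) (hB' U hU.2 hU.1 y hyU)
    · exact absurd (Finset.mem_of_mem_erase hyU) (hB' T hT.2 hT.1 y hyT)
    · exact h2 T hT.2 U hU.2 y hyT hyU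
  · intro y
    have h3y := h3 y
    constructor
    · intro hy
      have hyx : y ≠ x := fun h => hx (h ▸ hy)
      obtain ⟨T, hT, hyT⟩ := h3y.1 (Finset.mem_insert_of_mem hy)
      by_cases h : T = B
      · subst h
        exact ⟨_, Finset.mem_insert_self _ _, Finset.mem_erase.mpr ⟨hyx, hyT⟩⟩
      · exact ⟨T, Finset.mem_insert_of_mem (Finset.mem_erase.mpr ⟨h, hT⟩), hyT⟩
    · rintro ⟨T, hT, hy⟩
      rw [Finset.mem_insert, Finset.mem_erase] at hT
      have key : y ≠ x ∧ ∃ S ∈ Q, y ∈ S := by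
        rcases hT with rfl | hT
        · exact ⟨(Finset.mem_erase.mp hy).1, B, hB, (Finset.mem_erase.mp hy).2⟩
        · refine ⟨?_, T, hT.2, hy⟩
          rintro rfl
          exact hB' T hT.2 hT.1 y hy hxB
      exact (Finset.mem_insert.mp (h3y.2 key.2)).resolve_left key.1
  · intro h
    rw [Finset.mem_erase] at h
    obtain ⟨y, hy⟩ := hBn
    exact hB' _ h.2 h.1 y hy (Finset.mem_of_mem_erase hy)

theorem singleton_parts {t : Finset ℕ} {x : ℕ} (hx : x ∉ t) {P : Finset (Finset ℕ)}
    (hxP : {x} ∉ P) : P ∈ setParts t ↔ insert {x} P ∈ setParts (insert x t) := by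
  rw [mem_setParts_iff, mem_setParts_iff]
  constructor
  · rintro ⟨h1, h2, h3⟩
    have hxT : ∀ T ∈ P, x ∉ T := fun T hT h => hx ((h3 x).2 ⟨T, hT, h⟩)
    refine ⟨?_, ?_, ?_⟩
    · intro T hT
      rcases Finset.mem_insert.mp hT with rfl | hT
      · exact Finset.singleton_nonempty _
      · exact h1 T hT
    · intro T hT U hU y hyT hyU
      rcases Finset.mem_insert.mp hT with rfl | hT' <;> rcases Finset.mem_insert.mp hU with rfl | hU'
      · rfl
      · rw [Finset.mem_singleton] at hyT
        subst hyT
        exact absurd hyU (hxT _ hU')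
      · rw [Finset.mem_singleton] at hyU
        subst hyU
        exact absurd hyT (hxT _ hT')
      · exact h2 T hT' U hU' y hyT hyU
    · intro y
      simp [h3]
  · rintro ⟨h1, h2, h3⟩
    refine ⟨fun T hT => h1 T (Finset.mem_insert_of_mem hT), fun T hT U hU =>
      h2 T (Finset.mem_insert_of_mem hT) U (Finset.mem_insert_of_mem hU), ?_⟩
    intro y
    have h3y := h3 y
    simp only [Finset.mem_insert, exists_eq_or_imp, Finset.mem_singleton] at h3y
    by_cases hy : y = x
    · subst hy
      constructor
      · intro h
        exact absurd h hx
      · rintro ⟨T, hT, hyT⟩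
        have := h2 T (Finset.mem_insert_of_mem hT) {y} (Finset.mem_insert_self _ _) y hyT
          (Finset.mem_singleton_self y)
        exact absurd (this ▸ hT) hxP
    · simpa [hy] using h3y

theorem sum_setParts_insert {M : Type*} [AddCommMonoid M] (t : Finset ℕ) (x : ℕ) (hx : x ∉ t)
    (G : Finset (Finset ℕ) → M) :
    ∑ Q ∈ setParts (insert x t), G Q =
      ∑ P ∈ setParts t, (G (insert {x} P) + ∑ S ∈ P, G (insert (insert x S) (P.erase S))) := by
  have hxP : ∀ P ∈ setParts t, ∀ T ∈ P, x ∉ T := fun P hP T hT h =>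
    hx (((mem_setParts_iff.mp hP).2.2 x).2 ⟨T, hT, h⟩)
  have hsP : ∀ P ∈ setParts t, {x} ∉ P := fun P hP h =>
    hxP P hP _ h (Finset.mem_singleton_self x)
  rw [Finset.sum_add_distrib,
    ← Finset.sum_filter_add_sum_filter_not (setParts (insert x t)) (fun Q => {x} ∈ Q)]
  congr 1
  · symm
    refine Finset.sum_bij' (fun P _ => insert {x} P) (fun Q _ => Q.erase {x}) ?_ ?_ ?_ ?_ ?_
    · intro P hP
      exact Finset.mem_filter.mpr ⟨(singleton_parts hx (hsP P hP)).1 hP,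
        Finset.mem_insert_self _ _⟩
    · intro Q hQ
      rw [Finset.mem_filter] at hQ
      rw [singleton_parts hx (Finset.notMem_erase _ _), Finset.insert_erase hQ.2]
      exact hQ.1
    · intro P hP
      exact Finset.erase_insert (hsP P hP)
    · intro Q hQ
      exact Finset.insert_erase (Finset.mem_filter.mp hQ).2
    · intro P hP
      rfl
  · rw [Finset.sum_sigma']
    symm
    have hblk : ∀ Q ∈ setParts (insert x t), blk x Q ∈ Q ∧ x ∈ blk x Q := by
      intro Q hQ
      obtain ⟨B, hB, hxB⟩ := ((mem_setParts_iff.mp hQ).2.2 x).1 (Finset.mem_insert_self _ _)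
      rw [blk_eq hQ hB hxB]
      exact ⟨hB, hxB⟩
    refine Finset.sum_bij' (fun p _ => insert (insert x p.2) (p.1.erase p.2))
      (fun Q _ => ⟨insert ((blk x Q).erase x) (Q.erase (blk x Q)), (blk x Q).erase x⟩)
      ?_ ?_ ?_ ?_ ?_
    · rintro ⟨P, S⟩ h
      rw [Finset.mem_sigma] at h
      obtain ⟨hP, hS⟩ := h
      dsimp only at hP hS ⊢
      refine Finset.mem_filter.mpr ⟨insert_mem_parts hx hP hS, ?_⟩
      intro h
      rcases Finset.mem_insert.mp h with h | h
      · obtain ⟨y, hy⟩ := (mem_setParts_iff.mp hP).1 S hS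
        have : y ∈ ({x} : Finset ℕ) := h ▸ Finset.mem_insert_of_mem hy
        rw [Finset.mem_singleton] at this
        exact hxP P hP S hS (this ▸ hy)
      · exact hsP P hP (Finset.mem_of_mem_erase h)
    · intro Q hQ
      rw [Finset.mem_filter] at hQ
      rw [Finset.mem_sigma]
      obtain ⟨h1, h2⟩ := hblk Q hQ.1
      exact ⟨(erase_mem_parts hx hQ.1 h1 h2 hQ.2).1, Finset.mem_insert_self _ _⟩
    · rintro ⟨P, S⟩ h
      rw [Finset.mem_sigma] at h
      obtain ⟨hP, hS⟩ := h
      dsimp only at hP hS ⊢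
      have e : blk x (insert (insert x S) (P.erase S)) = insert x S :=
        blk_eq (insert_mem_parts hx hP hS) (Finset.mem_insert_self _ _)
          (Finset.mem_insert_self _ _)
      have e2 : insert x S ∉ P.erase S := fun h =>
        hxP P hP _ (Finset.mem_of_mem_erase h) (Finset.mem_insert_self _ _)
      rw [e, Finset.erase_insert (hxP P hP S hS), Finset.erase_insert e2,
        Finset.insert_erase hS]
    · intro Q hQ
      rw [Finset.mem_filter] at hQ
      obtain ⟨h1, h2⟩ := hblk Q hQ.1
      dsimp only
      rw [Finset.insert_erase h2,
        Finset.erase_insert (erase_mem_parts hx hQ.1 h1 h2 hQ.2).2, Finset.insert_erase h1]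
    · intro p hp
      rfl

section Weights
variable {R : Type*} [Ring R]

open Classical in
/-- The weight of a set of blocks (zero if the factors do not commute). -/
noncomputable def wt (c : ℕ → R) (P : Finset (Finset ℕ)) : R :=
  if h : (P : Set (Finset ℕ)).Pairwise (Function.onFun Commute fun S => c (S.card - 1)) then
    P.noncommProd (fun S => c (S.card - 1)) h else 0

theorem wt_eq (c : ℕ → R) (P : Finset (Finset ℕ))
    (h : (P : Set (Finset ℕ)).Pairwise (Function.onFun Commute fun S => c (S.card - 1))) :
    wt c P = P.noncommProd (fun S => c (S.card - 1)) h := dif_pos h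

theorem wt_empty (c : ℕ → R) : wt c ∅ = 1 := by
  rw [wt_eq c ∅ (by simp)]
  simp

theorem wt_insert (c : ℕ → R) (N : ℕ) (hc : ∀ i ≤ N, ∀ j ≤ N, c i * c j = c j * c i)
    (P : Finset (Finset ℕ)) (S : Finset ℕ) (hS : S ∉ P)
    (hN : ∀ T ∈ insert S P, T.card - 1 ≤ N) :
    wt c (insert S P) = c (S.card - 1) * wt c P := by
  rw [wt_eq c (insert S P), wt_eq c P, Finset.noncommProd_insert_of_notMem _ _ _ _ hS]
  · intro T hT U hU _
    exact hc _ (hN T hT) _ (hN U hU)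

theorem leibniz (a : R) (c : ℕ → R) (hs : ∀ i, c (i + 1) = a * c i - c i * a)
    (N : ℕ) (hc : ∀ i ≤ N, ∀ j ≤ N, c i * c j = c j * c i)
    (P : Finset (Finset ℕ)) :
    (∀ S ∈ P, S.Nonempty) → (∀ T ∈ P, T.card ≤ N) →
    a * wt c P = wt c P * a + ∑ S ∈ P, c S.card * wt c (P.erase S) := by
  induction P using Finset.induction_on with
  | empty => simp [wt_empty]
  | insert T P hT ih =>
    intro hne hN
    have ih := ih (fun S hS => hne S (Finset.mem_insert_of_mem hS))
      (fun S hS => hN S (Finset.mem_insert_of_mem hS))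
    have hN' : ∀ U ∈ insert T P, U.card - 1 ≤ N := fun U hU => (Nat.sub_le _ _).trans (hN U hU)
    have hT1 : c T.card = a * c (T.card - 1) - c (T.card - 1) * a := by
      rw [← hs, Nat.sub_add_cancel (Finset.card_pos.mpr (hne T (Finset.mem_insert_self _ _)))]
    rw [Finset.sum_insert hT, Finset.erase_insert hT, wt_insert c N hc P T hT hN']
    have e : ∑ S ∈ P, c S.card * wt c ((insert T P).erase S) =
        c (T.card - 1) * ∑ S ∈ P, c S.card * wt c (P.erase S) := by
      rw [Finset.mul_sum]
      refine Finset.sum_congr rfl fun S hS => ?_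
      have hST : T ≠ S := fun h => hT (h ▸ hS)
      rw [Finset.erase_insert_of_ne hST, wt_insert c N hc _ T
        (fun h => hT (Finset.mem_of_mem_erase h)), ← mul_assoc, ← mul_assoc,
        hc _ (hN S (Finset.mem_insert_of_mem hS)) _ (hN' T (Finset.mem_insert_self _ _))]
      intro U hU
      exact hN' U (Finset.insert_subset_insert _ (Finset.erase_subset _ _) hU)
    have e2 : ∑ S ∈ P, c S.card * wt c (P.erase S) = a * wt c P - wt c P * a := by
      rw [ih]; abel
    rw [e, e2, hT1]
    noncomm_ring

theorem step_parts (a : R) (c : ℕ → R) (hs : ∀ i, c (i + 1) = a * c i - c i * a)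
    (N : ℕ) (hc : ∀ i ≤ N, ∀ j ≤ N, c i * c j = c j * c i)
    (t : Finset ℕ) (x : ℕ) (hx : x ∉ t) (ht : t.card ≤ N) :
    ∑ Q ∈ setParts (insert x t), wt c Q + ∑ P ∈ setParts t, wt c P * a =
      (a + c 0) * ∑ P ∈ setParts t, wt c P := by
  rw [sum_setParts_insert t x hx, Finset.mul_sum, ← Finset.sum_add_distrib]
  refine Finset.sum_congr rfl fun P hP => ?_
  have hP' := mem_setParts_iff.mp hP
  obtain ⟨h1, h2, h3⟩ := hP'
  have hxT : ∀ T ∈ P, x ∉ T := fun T hT h => hx ((h3 x).2 ⟨T, hT, h⟩)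
  have hN : ∀ T ∈ P, T.card ≤ N := fun T hT =>
    (Finset.card_le_card fun y hy => (h3 y).2 ⟨T, hT, hy⟩).trans ht
  have hN' : ∀ T ∈ P, T.card - 1 ≤ N := fun T hT => (Nat.sub_le _ _).trans (hN T hT)
  have e : ∀ S ∈ P, wt c (insert (insert x S) (P.erase S)) = c S.card * wt c (P.erase S) := by
    intro S hS
    have hcard : (insert x S).card - 1 = S.card := by
      rw [Finset.card_insert_of_notMem (hxT S hS), Nat.add_sub_cancel]
    rw [wt_insert c N hc, hcard]
    · exact fun h => hxT _ (Finset.mem_of_mem_erase h) (Finset.mem_insert_self _ _)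
    · intro T hT
      rcases Finset.mem_insert.mp hT with rfl | hT
      · rw [hcard]; exact hN S hS
      · exact hN' T (Finset.mem_of_mem_erase hT)
  rw [Finset.sum_congr rfl e, wt_insert c N hc, add_mul, leibniz a c hs N hc P h1 hN]
  · simp only [Finset.card_singleton, Nat.sub_self]
    abel
  · exact fun h => hxT _ h (Finset.mem_singleton_self x)
  · intro T hT
    rcases Finset.mem_insert.mp hT with rfl | hT
    · simp
    · exact hN' T hT

theorem main_sum (a : R) (c : ℕ → R) (hs : ∀ i, c (i + 1) = a * c i - c i * a)
    (N : ℕ) (hc : ∀ i ≤ N, ∀ j ≤ N, c i * c j = c j * c i) (m : ℕ) (hm : m ≤ N + 1) :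
    (a + c 0) ^ m = ∑ S₀ ∈ (Finset.range m).powerset,
      (∑ P ∈ setParts (Finset.range m \ S₀), wt c P) * a ^ S₀.card := by
  induction m with
  | zero =>
    have : setParts ∅ = {∅} := by
      ext P
      rw [mem_setParts_iff, Finset.mem_singleton]
      constructor
      · rintro ⟨h1, -, h3⟩
        rw [Finset.eq_empty_iff_forall_notMem]
        intro S hS
        obtain ⟨y, hy⟩ := h1 S hS
        exact absurd ((h3 y).2 ⟨S, hS, hy⟩) (Finset.notMem_empty y)
      · rintro rfl
        simp
    simp [this, wt_empty]
  | succ m ih =>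
    rw [pow_succ', ih (by omega), Finset.mul_sum, Finset.range_add_one,
      Finset.sum_powerset_insert Finset.notMem_range_self, ← Finset.sum_add_distrib]
    refine Finset.sum_congr rfl fun S hS => ?_
    have hmS : m ∉ S := fun h =>
      Finset.notMem_range_self (Finset.mem_powerset.mp hS h)
    have hx : m ∉ Finset.range m \ S := by simp
    have hcard : (Finset.range m \ S).card ≤ N := by
      have := Finset.card_le_card (Finset.sdiff_subset (s := Finset.range m) (t := S))
      rw [Finset.card_range] at this
      omega
    have e2 : insert m (Finset.range m) \ insert m S = Finset.range m \ S := by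
      ext y
      simp only [Finset.mem_sdiff, Finset.mem_insert, Finset.mem_range]
      grind
    rw [Finset.insert_sdiff_of_notMem _ hmS, e2, Finset.card_insert_of_notMem hmS, ← mul_assoc,
      ← step_parts a c hs N hc _ m hx hcard, add_mul, pow_succ', ← Finset.sum_mul, mul_assoc]

end Weights

open Finset in
/-- Let `R` be an associative unital (possibly noncommutative)
ring, `a b ∈ R`, and define the iterated commutators `b₀ = b`,
`b_{i+1} = a * b_i - b_i * a`.  Fix `n ≥ 0` and assume that `b_i` and `b_j`
commute for all `0 ≤ i, j ≤ n - 1`.  Then `(a + b) ^ n` equals the sum, over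
all pairs `(S₀, π)` where `S₀` is a subset of `{1, …, n}` (here realized as
`Finset.range n`) and `π` is a partition of its complement into nonempty
pairwise disjoint blocks, of `(∏_{S ∈ π} b_{|S| - 1}) * a ^ |S₀|`, the product
over the blocks being well defined since the factors commute pairwise. -/
theorem statement0 {R : Type*} [Ring R] (a b : R) (bIter : ℕ → R)
    (hb0 : bIter 0 = b)
    (hbsucc : ∀ i, bIter (i + 1) = a * bIter i - bIter i * a)
    (n : ℕ)
    (hcomm : ∀ i ≤ n - 1, ∀ j ≤ n - 1, bIter i * bIter j = bIter j * bIter i) :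
    (a + b) ^ n =
      ∑ S₀ ∈ (range n).powerset,
        ∑ P ∈ (((range n \ S₀).powerset.powerset).filter
            (fun P : Finset (Finset ℕ) =>
              (∀ S ∈ P, S.Nonempty) ∧
              (∀ S ∈ P, ∀ T ∈ P, S ≠ T → Disjoint S T) ∧
              P.biUnion id = range n \ S₀)).attach,
          (P.1.noncommProd (fun S => bIter (S.card - 1))
            (by
              intro S hS T hT _
              simp only [Finset.mem_coe] at hS hT
              have hP := Finset.mem_filter.mp P.2
              have hsub : ∀ U ∈ P.1, U ⊆ range n \ S₀ := fun U hU =>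
                Finset.mem_powerset.mp (Finset.mem_powerset.mp hP.1 hU)
              have hcard : ∀ U ∈ P.1, U.card - 1 ≤ n - 1 := by
                intro U hU
                have h1 : U.Nonempty := hP.2.1 U hU
                have h2 : U ⊆ range n :=
                  (hsub U hU).trans (Finset.sdiff_subset)
                have h3 : U.card ≤ n := by
                  simpa using Finset.card_le_card h2
                omega
              exact hcomm _ (hcard S hS) _ (hcard T hT))) * a ^ S₀.card := by
  subst hb0
  rw [main_sum a bIter hbsucc (n - 1) hcomm n (by omega)]
  refine Finset.sum_congr rfl fun S₀ _ => ?_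
  rw [Finset.sum_mul]
  unfold setParts
  rw [← Finset.sum_attach]
  refine Finset.sum_congr rfl fun P _ => ?_
  exact congrArg (· * a ^ S₀.card) (wt_eq bIter P.1 _)
end

section
/- Let p be a prime and let R be an associative unital (possibly noncommutative) ring of characteristic p (p·x = 0 for every x ∈ R). Let a, b ∈ R, and define the iterated commutators b_0 = b and b_{i+1} = a*b_i − b_i*a. If b_i*b_j = b_j*b_i for all 0 ≤ i, j ≤ p−1, then (a+b)^p = a^p + b_{p−1} + b^p. -/
/-- Expansion of a derivation of a power in terms of iterated commutators. -/
theorem derivative_pow_aux {S : Type*} [Ring S] (x : S) (c F : ℕ → S)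
    (hc : ∀ i, c (i + 1) = x * c i - c i * x)
    (F0 : F 0 = 0) (Fs : ∀ n, F (n + 1) = c 0 * x ^ n + x * F n) (n : ℕ) :
    F n = ∑ j ∈ Finset.range n, (n.choose (j + 1)) • (c j * x ^ (n - 1 - j)) := by
  induction n with
  | zero => simp [F0]
  | succ n ih =>
    have h1 : x * F n = ∑ j ∈ Finset.range n, (n.choose (j + 1)) • (c j * x ^ (n - j))
        + ∑ j ∈ Finset.range n, (n.choose (j + 1)) • (c (j + 1) * x ^ (n - (j + 1))) := by
      rw [ih, Finset.mul_sum, ← Finset.sum_add_distrib]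
      refine Finset.sum_congr rfl fun j hj => ?_
      have hj' : j < n := Finset.mem_range.1 hj
      have e1 : n - 1 - j = n - (j + 1) := by omega
      have e2 : n - j = (n - (j + 1)) + 1 := by omega
      rw [e1, e2, mul_smul_comm, ← smul_add, hc, pow_succ' x]
      congr 1
      noncomm_ring
    have h2 : ∑ j ∈ Finset.range (n + 1), (n.choose j) • (c j * x ^ (n - j))
        = ∑ j ∈ Finset.range n, (n.choose (j + 1)) • (c (j + 1) * x ^ (n - (j + 1)))
          + c 0 * x ^ n := by
      rw [Finset.sum_range_succ']; simp
    have h3 : ∑ j ∈ Finset.range (n + 1), (n.choose (j + 1)) • (c j * x ^ (n - j))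
        = ∑ j ∈ Finset.range n, (n.choose (j + 1)) • (c j * x ^ (n - j)) := by
      rw [Finset.sum_range_succ]; simp
    have h4 : ∑ j ∈ Finset.range (n + 1), ((n + 1).choose (j + 1)) • (c j * x ^ (n + 1 - 1 - j))
        = ∑ j ∈ Finset.range (n + 1), (n.choose j) • (c j * x ^ (n - j))
        + ∑ j ∈ Finset.range (n + 1), (n.choose (j + 1)) • (c j * x ^ (n - j)) := by
      rw [← Finset.sum_add_distrib]
      refine Finset.sum_congr rfl fun j _ => ?_
      rw [Nat.choose_succ_succ, add_smul, Nat.add_sub_cancel]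
    rw [h4, h3, h2, Fs, h1]
    abel


/-- Let `p` be a prime and `R` an associative unital (possibly
noncommutative) ring of characteristic `p` (`p • x = 0` for every `x`).  Let
`a, b ∈ R` and define the iterated commutators `b₀ = b`,
`b_{i+1} = a * b_i - b_i * a`.  If `b_i` and `b_j` commute for all
`0 ≤ i, j ≤ p - 1`, then `(a + b) ^ p = a ^ p + b_{p-1} + b ^ p`. -/
theorem statement1 {R : Type*} [Ring R] (p : ℕ) (hp : p.Prime)
    (hchar : ∀ x : R, p • x = 0)
    (a b : R) (bIter : ℕ → R)
    (hb0 : bIter 0 = b)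
    (hbsucc : ∀ i, bIter (i + 1) = a * bIter i - bIter i * a)
    (hcomm : ∀ i ≤ p - 1, ∀ j ≤ p - 1, bIter i * bIter j = bIter j * bIter i) :
    (a + b) ^ p = a ^ p + bIter (p - 1) + b ^ p := by
  classical
  obtain ⟨q, rfl⟩ : ∃ q, p = q + 1 := ⟨p - 1, by have := hp.pos; omega⟩
  simp only [Nat.add_sub_cancel] at *
  let x : Polynomial R := Polynomial.C a + Polynomial.C b * Polynomial.X
  let c : ℕ → Polynomial R := fun i => Nat.rec (Polynomial.C b) (fun _ y => x * y - y * x) i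
  have hc : ∀ i, c (i + 1) = x * c i - c i * x := fun i => rfl
  have hcb : ∀ i ≤ q, c i = Polynomial.C (bIter i) := by
    intro i
    induction i with
    | zero => intro _; rw [hb0]; rfl
    | succ i ih =>
      intro hi
      have h := hcomm 0 (by omega) i (by omega)
      rw [hb0] at h
      rw [hc, ih (by omega), hbsucc]
      simp only [x, add_mul, mul_add, Polynomial.C_sub, Polynomial.C_mul]
      have e1 : Polynomial.C b * Polynomial.X * Polynomial.C (bIter i)
          = Polynomial.C (bIter i) * (Polynomial.C b * Polynomial.X) := by
        rw [mul_assoc, Polynomial.X_mul_C, ← mul_assoc, ← mul_assoc, ← Polynomial.C_mul,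
          ← Polynomial.C_mul, h]
      rw [e1]; abel
  have hder : Polynomial.derivative (x ^ (q + 1)) = Polynomial.C (bIter q) := by
    have hx : Polynomial.derivative x = c 0 := by simp [x, c]
    rw [derivative_pow_aux x c (fun n => Polynomial.derivative (x ^ n)) hc (by simp)
      (fun n => by simp only [pow_succ', Polynomial.derivative_mul, hx]) (q + 1),
      Finset.sum_range_succ, Finset.sum_eq_zero]
    · simp [hcb q le_rfl]
    · intro j hj
      have hj' := Finset.mem_range.1 hj
      obtain ⟨m, hm⟩ := hp.dvd_choose_self (k := j + 1) (by omega) (by omega)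
      rw [hm, mul_smul]
      ext n
      rw [Polynomial.coeff_smul, hchar]; simp
  have hdeg1 : x.natDegree ≤ 1 := by
    simp only [x]; compute_degree
  have hdeg : (x ^ (q + 1)).natDegree < q + 2 := by
    have := Polynomial.natDegree_pow_le_of_le (q + 1) hdeg1
    omega
  have htop : (x ^ (q + 1)).coeff (q + 1) = b ^ (q + 1) := by
    have := Polynomial.coeff_pow_of_natDegree_le (m := q + 1) hdeg1
    rw [mul_one] at this
    rw [this]; simp [x, Polynomial.coeff_C]
  have h0 : (x ^ (q + 1)).coeff 0 = a ^ (q + 1) := by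
    have := map_pow Polynomial.constantCoeff x (q + 1)
    simpa [x] using this
  have hco : ∀ n, (x ^ (q + 1)).coeff (n + 1) * (n + 1) = if n = 0 then bIter q else 0 := by
    intro n
    rw [← Polynomial.coeff_derivative, hder, Polynomial.coeff_C]
  have hq : 1 ≤ q := by have := hp.two_le; omega
  have hmid : ∀ n, 1 ≤ n → n < q → (x ^ (q + 1)).coeff (n + 1) = 0 := by
    intro n h1 h2
    have h := hco n
    rw [if_neg (by omega)] at h
    have h' : (n + 1) • (x ^ (q + 1)).coeff (n + 1) = 0 := by
      rw [nsmul_eq_mul, ← h]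
      have := Nat.cast_commute (n + 1) ((x ^ (q + 1)).coeff (n + 1))
      rw [this.eq]; push_cast; rfl
    have d1 := addOrderOf_dvd_of_nsmul_eq_zero h'
    have d2 := addOrderOf_dvd_of_nsmul_eq_zero (hchar ((x ^ (q + 1)).coeff (n + 1)))
    have cop : Nat.Coprime (n + 1) (q + 1) :=
      (Nat.coprime_of_lt_prime (by omega) (by omega) hp).symm
    exact AddMonoid.addOrderOf_eq_one_iff.1 (Nat.eq_one_of_dvd_coprimes cop d1 d2)
  have hev : (x ^ (q + 1)).eval 1 = (a + b) ^ (q + 1) := by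
    have := map_pow (Polynomial.eval₂RingHom' (RingHom.id R) 1 (fun r => Commute.one_right _))
      x (q + 1)
    simp only [Polynomial.eval₂RingHom', RingHom.coe_mk, MonoidHom.coe_mk, OneHom.coe_mk] at this
    rw [Polynomial.eval, this]
    congr 1
    change x.eval 1 = a + b
    simp [x]
  rw [← hev, Polynomial.eval_eq_sum_range' hdeg]
  simp only [one_pow, mul_one]
  rw [Finset.sum_range_succ, htop, Finset.sum_range_succ', h0]
  have hone : (x ^ (q + 1)).coeff (0 + 1) = bIter q := by simpa using hco 0
  rw [Finset.sum_eq_single_of_mem 0 (by simp; omega), hone, add_comm (bIter q)]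
  intro n hn hn0
  exact hmid n (by omega) (Finset.mem_range.1 hn)
end

section
/- Let R be a commutative ring, A a commutative R-algebra, D an R-derivation of A, and a ∈ A. In the ring of R-linear endomorphisms of A, write L_x for the operator of multiplication by x ∈ A, and set T = L_a + D. Define b_i = T^i(1) for i ≥ 0. Then for every k ≥ 0 one has the operator identity T^k = Σ_{i=0}^{k} (k choose i) · (L_{b_i} ∘ D^{k−i}), where D^{k−i} denotes the (k−i)-fold composite of the underlying linear map of D. -/
/-- Let `R` be a commutative ring, `A` a commutative `R`-algebra,
`D` an `R`-derivation of `A` and `a ∈ A`.  Writing `L_x` for the multiplication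
operator by `x` and setting `T = L_a + D`, `b i = T^i 1`, one has for every `k`
the operator identity `T ^ k = ∑_{i=0}^{k} (k choose i) • (L_{b i} ∘ D ^ (k - i))`. -/
theorem statement2 {R A : Type*} [CommRing R] [CommRing A] [Algebra R A]
    (D : Derivation R A A) (a : A) (b : ℕ → A)
    (hb : ∀ i, b i = ((LinearMap.mulLeft R a + (D : A →ₗ[R] A)) ^ i) 1)
    (k : ℕ) :
    (LinearMap.mulLeft R a + (D : A →ₗ[R] A)) ^ k =
      ∑ i ∈ Finset.range (k + 1),
        (k.choose i) • (LinearMap.mulLeft R (b i) * (D : A →ₗ[R] A) ^ (k - i)) := by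
  have key : ∀ i j : ℕ, (LinearMap.mulLeft R a + (D : A →ₗ[R] A)) *
      (LinearMap.mulLeft R (b i) * (D : A →ₗ[R] A) ^ j) =
      LinearMap.mulLeft R (b i) * (D : A →ₗ[R] A) ^ (j + 1) +
      LinearMap.mulLeft R (b (i + 1)) * (D : A →ₗ[R] A) ^ j := by
    intro i j
    have hs : b (i + 1) = a * b i + D (b i) := by
      rw [hb (i + 1), pow_succ', Module.End.mul_apply, ← hb i]
      simp
    ext x
    rw [pow_succ']
    simp only [Module.End.mul_apply, LinearMap.add_apply, LinearMap.mulLeft_apply, hs,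
      Derivation.coeFn_coe, Derivation.leibniz, smul_eq_mul]
    ring
  rw [← Finset.Nat.sum_antidiagonal_eq_sum_range_succ
    (fun i j => (k.choose i) • (LinearMap.mulLeft R (b i) * (D : A →ₗ[R] A) ^ j)) k]
  induction k with
  | zero =>
    ext x
    simp [hb 0]
  | succ k ih =>
    rw [Finset.sum_antidiagonal_choose_succ_nsmul
      (fun i j => LinearMap.mulLeft R (b i) * (D : A →ₗ[R] A) ^ j) k, pow_succ', ih,
      Finset.mul_sum, ← Finset.sum_add_distrib]
    refine Finset.sum_congr rfl fun p hp => ?_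
    have hc : k.choose p.2 = k.choose p.1 :=
      (Nat.choose_symm_of_eq_add (Finset.HasAntidiagonal.mem_antidiagonal.mp hp).symm).symm
    rw [hc, mul_smul_comm, key, smul_add]
end

section
/- Let p be a prime, R a commutative ring, and A a commutative R-algebra of characteristic p. Let D be an R-derivation of A and a ∈ A. Writing L_x for multiplication by x and setting T = L_a + D and b = T^p(1), one has the operator identity T^p = L_b + D^p, where T^p and D^p are p-fold composites in the endomorphism ring End_R(A). -/
theorem aux_leibniz {R A : Type*} [CommRing R] [CommRing A] [Algebra R A]
    (T D : A →ₗ[R] A) (h : ∀ x y, T (x * y) = T x * y + x * D y) (n : ℕ) (x y : A) :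
    (T ^ n) (x * y) = ∑ ij ∈ Finset.HasAntidiagonal.antidiagonal n,
      n.choose ij.1 • ((T ^ ij.1) x * (D ^ ij.2) y) := by
  induction n with
  | zero => simp
  | succ n ih =>
    rw [Finset.sum_antidiagonal_choose_succ_nsmul (M := A)
      (fun i j => (T ^ i) x * (D ^ j) y) n, pow_succ', Module.End.mul_apply, ih, map_sum,
      ← Finset.sum_add_distrib]
    refine Finset.sum_congr rfl fun ij hij => ?_
    have hc : n.choose ij.2 = n.choose ij.1 :=
      (Nat.choose_symm_of_eq_add (Finset.HasAntidiagonal.mem_antidiagonal.1 hij).symm).symm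
    rw [map_nsmul, h, pow_succ', pow_succ', Module.End.mul_apply, Module.End.mul_apply,
      hc, nsmul_add, add_comm]

/-- Let `p` be a prime, `R` a commutative ring and `A` a
commutative `R`-algebra of characteristic `p`.  Let `D` be an `R`-derivation of
`A` and `a ∈ A`.  With `L_x` multiplication by `x`, `T = L_a + D` and
`b = T ^ p 1`, one has the operator identity `T ^ p = L_b + D ^ p` in
`End_R(A)`. -/
theorem statement3 {R A : Type*} [CommRing R] [CommRing A] [Algebra R A]
    (p : ℕ) (hp : p.Prime) [CharP A p]
    (D : Derivation R A A) (a : A) :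
    (LinearMap.mulLeft R a + (D : A →ₗ[R] A)) ^ p =
      LinearMap.mulLeft R (((LinearMap.mulLeft R a + (D : A →ₗ[R] A)) ^ p) 1) +
        (D : A →ₗ[R] A) ^ p := by
  ext y
  have h := aux_leibniz (LinearMap.mulLeft R a + (D : A →ₗ[R] A)) (D : A →ₗ[R] A)
    (by intro x y; simp; ring) p 1 y
  rw [one_mul] at h
  rw [h, Finset.sum_eq_add_of_mem (p, 0) (0, p) (by simp) (by simp)
    (by simp [hp.ne_zero])]
  · simp
  · rintro ⟨i, j⟩ hij ⟨h1, h2⟩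
    have hij' : i + j = p := Finset.HasAntidiagonal.mem_antidiagonal.1 hij
    have hi : i ≠ 0 := by
      rintro rfl
      apply h2
      simp at hij'
      simp [hij']
    have hi' : i < p := by
      refine lt_of_le_of_ne (by omega) ?_
      rintro rfl
      apply h1
      simp at hij'
      simp [hij']
    rw [nsmul_eq_mul, (CharP.cast_eq_zero_iff A p _).2 (hp.dvd_choose_self hi hi'), zero_mul]
end

section
/- Let p be a prime, R a commutative ring, and A a commutative R-algebra of characteristic p. Let D be an R-derivation of A. Then the p-fold composite D^p of the underlying linear map of D again satisfies the Leibniz rule: D^p(xy) = x·D^p(y) + D^p(x)·y for all x, y ∈ A; consequently D^p is an R-derivation of A. -/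
/-- The iterated Leibniz rule for a derivation. -/
theorem iterated_leibniz_aux {R A : Type*} [CommRing R] [CommRing A] [Algebra R A]
    (D : Derivation R A A) (n : ℕ) (x y : A) :
    ((D : A →ₗ[R] A) ^ n) (x * y) = ∑ ij ∈ Finset.HasAntidiagonal.antidiagonal n,
      n.choose ij.1 • (((D : A →ₗ[R] A) ^ ij.1) x * ((D : A →ₗ[R] A) ^ ij.2) y) := by
  induction n with
  | zero => simp
  | succ n ih =>
    rw [Finset.sum_antidiagonal_choose_succ_nsmul
      (fun i j => ((D : A →ₗ[R] A) ^ i) x * ((D : A →ₗ[R] A) ^ j) y)]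
    rw [pow_succ', Module.End.mul_apply, ih, map_sum, ← Finset.sum_add_distrib]
    refine Finset.sum_congr rfl fun ij hij => ?_
    have h : n.choose ij.2 = n.choose ij.1 :=
      (Nat.choose_symm_of_eq_add (Finset.HasAntidiagonal.mem_antidiagonal.mp hij).symm).symm
    rw [map_nsmul, h, ← smul_add, pow_succ', pow_succ', Module.End.mul_apply,
      Module.End.mul_apply, Derivation.coeFn_coe, Derivation.leibniz, smul_eq_mul, smul_eq_mul]
    congr 2
    exact mul_comm _ _

/-- Let `p` be a prime, `R` a commutative ring and `A` a
commutative `R`-algebra of characteristic `p`.  For an `R`-derivation `D` of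
`A`, the `p`-fold composite `D ^ p` of the underlying linear map again
satisfies the Leibniz rule, hence is an `R`-derivation of `A`. -/
theorem statement4 {R A : Type*} [CommRing R] [CommRing A] [Algebra R A]
    (p : ℕ) (hp : p.Prime) [CharP A p]
    (D : Derivation R A A) :
    ∀ x y : A, ((D : A →ₗ[R] A) ^ p) (x * y) =
      x * (((D : A →ₗ[R] A) ^ p) y) + (((D : A →ₗ[R] A) ^ p) x) * y := by
  intro x y
  rw [iterated_leibniz_aux, Finset.Nat.sum_antidiagonal_eq_sum_range_succ_mk,
    Finset.sum_range_succ, Finset.sum_eq_single 0]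
  · simp
  · intro i hi h0
    obtain ⟨k, hk⟩ := hp.dvd_choose_self h0 (Finset.mem_range.mp hi)
    rw [nsmul_eq_mul, hk, Nat.cast_mul, CharP.cast_eq_zero, zero_mul, zero_mul]
  · intro h
    exact absurd (Finset.mem_range.mpr hp.pos) h
end

section
/- Let p be a prime, R a commutative ring, and A a commutative R-algebra of characteristic p. Let T be an R-linear endomorphism of A such that for every a ∈ A there exists c ∈ A with T ∘ L_a − L_a ∘ T = L_c, where L_x denotes multiplication by x. Then the p-fold composite T^p has the same property: for every a ∈ A there exists c' ∈ A with T^p ∘ L_a − L_a ∘ T^p = L_{c'}. (This says: the p-th power of a differential operator of order ≤ 1 on A is again a differential operator of order ≤ 1.) -/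
/-- Let `p` be a prime, `R` a commutative ring and `A` a
commutative `R`-algebra of characteristic `p`.  Let `T` be an `R`-linear
endomorphism of `A` such that for every `a ∈ A` the commutator
`T ∘ L_a - L_a ∘ T` is multiplication by some element of `A` (i.e. `T` is a
differential operator of order `≤ 1`).  Then `T ^ p` has the same property. -/
theorem statement5 {R A : Type*} [CommRing R] [CommRing A] [Algebra R A]
    (p : ℕ) (hp : p.Prime) [CharP A p]
    (T : A →ₗ[R] A)
    (hT : ∀ a : A, ∃ c : A,
      T * LinearMap.mulLeft R a - LinearMap.mulLeft R a * T = LinearMap.mulLeft R c) :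
    ∀ a : A, ∃ c' : A,
      T ^ p * LinearMap.mulLeft R a - LinearMap.mulLeft R a * T ^ p =
        LinearMap.mulLeft R c' := by
  have : Fact p.Prime := ⟨hp⟩
  have : CharP (Module.End R (Module.End R A)) p := by
    refine ⟨fun n => ?_⟩
    rw [← CharP.cast_eq_zero_iff A p n]
    constructor
    · intro h
      have h1 := congrArg (fun F : Module.End R (Module.End R A) => (F 1) 1) h
      simpa [Module.End.natCast_apply] using h1
    · intro h
      ext F x
      simp [Module.End.natCast_apply, nsmul_eq_mul, h]
  have key : ∀ n : ℕ, ∀ a : A, ∃ c : A,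
      ((LinearMap.mulLeft R T - LinearMap.mulRight R T :
        Module.End R (Module.End R A)) ^ n) (LinearMap.mulLeft R a) =
        LinearMap.mulLeft R c := by
    intro n
    induction n with
    | zero => exact fun a => ⟨a, rfl⟩
    | succ n ih =>
      intro a
      obtain ⟨c, hc⟩ := hT a
      obtain ⟨d, hd⟩ := ih c
      refine ⟨d, ?_⟩
      rw [pow_succ, Module.End.mul_apply, ← hd, ← hc]
      rfl
  intro a
  obtain ⟨c, hc⟩ := key p a
  refine ⟨c, ?_⟩
  have hcomm : Commute (LinearMap.mulLeft R T : Module.End R (Module.End R A))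
      (LinearMap.mulRight R T) := by
    refine LinearMap.ext fun F => ?_
    exact (mul_assoc T F T).symm
  have hpow : (LinearMap.mulLeft R T - LinearMap.mulRight R T :
      Module.End R (Module.End R A)) ^ p =
      LinearMap.mulLeft R (T ^ p) - LinearMap.mulRight R (T ^ p) := by
    refine (sub_pow_char_of_commute (R := Module.End R (Module.End R A)) p hcomm).trans ?_
    rw [LinearMap.pow_mulLeft, LinearMap.pow_mulRight]
  rw [hpow] at hc
  exact hc
end

section
/- Let p be a prime, R a commutative ring, A a commutative R-algebra of characteristic p, and M an A-module. Let ∇ be a connection on M, i.e., a map assigning to each R-derivation D of A an R-linear endomorphism ∇_D of M such that ∇_{D+E} = ∇_D + ∇_E, ∇_{a•D}(m) = a•(∇_D m), and ∇_D(a•m) = (D a)•m + a•(∇_D m) for all a ∈ A, m ∈ M. For an R-derivation D, let D^{[p]} denote the R-derivation of A whose underlying linear map is the p-fold composite of D, and define the p-curvature ψ(D) := (∇_D)^p − ∇_{D^{[p]}} ∈ End_R(M). Then for every R-derivation D of A, ψ(D) is A-linear: ψ(D)(a•m) = a•(ψ(D)(m)) for all a ∈ A, m ∈ M. -/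
theorem leib_pow_aux {R A M : Type*} [CommRing R] [CommRing A] [Algebra R A]
    [AddCommGroup M] [Module R M] [Module A M]
    (N : Module.End R M) (D : A →ₗ[R] A)
    (h : ∀ (a : A) (m : M), N (a • m) = (D a) • m + a • N m)
    (n : ℕ) (a : A) (m : M) :
    (N ^ n) (a • m) = ∑ ij ∈ Finset.HasAntidiagonal.antidiagonal n,
      n.choose ij.1 • (((D ^ ij.1) a) • ((N ^ ij.2) m)) := by
  induction n with
  | zero => simp
  | succ n ih =>
    rw [Finset.sum_antidiagonal_choose_succ_nsmul
      (fun i j => ((D ^ i) a) • ((N ^ j) m)) n, pow_succ', Module.End.mul_apply, ih, map_sum,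
      ← Finset.sum_add_distrib]
    refine Finset.sum_congr rfl fun ij hij => ?_
    have hc : n.choose ij.2 = n.choose ij.1 := by
      rw [Finset.HasAntidiagonal.mem_antidiagonal] at hij
      exact Nat.choose_symm_of_eq_add (by omega)
    simp only [map_nsmul, h, hc, pow_succ', Module.End.mul_apply, nsmul_add]
    exact add_comm _ _

/-- Let `p` be a prime, `R` a commutative ring, `A` a
commutative `R`-algebra of characteristic `p` and `M` an `A`-module.  Let `∇`
be a connection on `M`: a map from `R`-derivations of `A` to `R`-linear
endomorphisms of `M` which is additive in `D`, `A`-linear in `D`, and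
satisfies the Leibniz rule.  For a derivation `D`, let `Dp` be the
`R`-derivation whose underlying map is the `p`-fold composite of `D`.  Then the
`p`-curvature `ψ(D) = (∇_D)^p - ∇_{Dp}` is `A`-linear. -/
theorem statement6 {R A M : Type*} [CommRing R] [CommRing A] [Algebra R A]
    [AddCommGroup M] [Module R M] [Module A M] [IsScalarTower R A M]
    (p : ℕ) (hp : p.Prime) [CharP A p]
    (nabla : Derivation R A A → Module.End R M)
    (hadd : ∀ D E : Derivation R A A, nabla (D + E) = nabla D + nabla E)
    (hsmul : ∀ (a : A) (D : Derivation R A A) (m : M),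
      nabla (a • D) m = a • nabla D m)
    (hleib : ∀ (D : Derivation R A A) (a : A) (m : M),
      nabla D (a • m) = (D a) • m + a • nabla D m)
    (D Dp : Derivation R A A)
    (hDp : ∀ x : A, Dp x = (((D : A →ₗ[R] A)) ^ p) x)
    (a : A) (m : M) :
    ((nabla D) ^ p - nabla Dp) (a • m) = a • (((nabla D) ^ p - nabla Dp) m) := by
  have key : (nabla D ^ p) (a • m) =
      (((D : A →ₗ[R] A) ^ p) a) • m + a • (nabla D ^ p) m := by
    rw [leib_pow_aux (nabla D) (D : A →ₗ[R] A) (hleib D) p a m,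
      Finset.Nat.sum_antidiagonal_eq_sum_range_succ_mk, Finset.sum_range_succ]
    obtain ⟨q, rfl⟩ : ∃ q, p = q + 1 := ⟨p - 1, by have := hp.pos; omega⟩
    rw [Finset.sum_range_succ', Finset.sum_eq_zero]
    · simp [add_comm]
    · intro i hi
      rw [Finset.mem_range] at hi
      have h0 : (((q + 1).choose (i + 1) : ℕ) : A) = 0 :=
        (CharP.cast_eq_zero_iff A (q + 1) _).2
          (hp.dvd_choose_self (by omega) (by omega))
      rw [← Nat.cast_smul_eq_nsmul A, h0, zero_smul]
  rw [LinearMap.sub_apply, LinearMap.sub_apply, key, hleib, hDp, smul_sub]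
  abel
end

section
/- Let p be a prime, R a commutative ring, A a commutative R-algebra of characteristic p, and M an A-module with a connection ∇ (a map from R-derivations of A to R-linear endomorphisms of M that is additive in D, A-linear in D, and satisfies the Leibniz rule). With ψ(D) := (∇_D)^p − ∇_{D^{[p]}} the p-curvature, one has for every a ∈ A and every R-derivation D of A: ψ(a•D)(m) = a^p • (ψ(D)(m)) for all m ∈ M; that is, ψ(a•D) = a^p • ψ(D). -/
namespace PCurv
open Polynomial

/-- Coefficients of `(aT)^n = ∑ k, c n k T^k`. -/
def cf {R A : Type*} [CommRing R] [CommRing A] [Algebra R A]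
    (D : Derivation R A A) (a : A) : ℕ → ℕ → A
  | 0, 0 => 1
  | 0, _ + 1 => 0
  | n + 1, 0 => a * D (cf D a n 0)
  | n + 1, k + 1 => a * (D (cf D a n (k + 1)) + cf D a n k)

section
variable {R A : Type*} [CommRing R] [CommRing A] [Algebra R A] (D : Derivation R A A) (a : A)

theorem cf_gt (n : ℕ) : ∀ k, n < k → cf D a n k = 0 := by
  induction n with
  | zero => intro k hk; obtain _ | k := k; · omega
            · rfl
  | succ n ih =>
    intro k hk
    obtain _ | k := k
    · omega
    · rw [cf, ih _ (by omega), ih _ (by omega)]; simp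

theorem cf_self (n : ℕ) : cf D a n n = a ^ n := by
  induction n with
  | zero => simp [cf]
  | succ n ih => rw [cf, cf_gt _ _ _ _ (by omega), ih, map_zero, zero_add, pow_succ']

theorem cf_zero (n : ℕ) : cf D a (n + 1) 0 = 0 := by
  induction n with
  | zero => simp [cf]
  | succ n ih => rw [cf, ih]; simp

theorem pow_eq_sum {N : Type*} [AddCommGroup N] [Module R N] [Module A N]
    (S T : Module.End R N) (hS : ∀ x, S x = a • T x)
    (hT : ∀ (b : A) (x : N), T (b • x) = D b • x + b • T x) (n : ℕ) (x : N) :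
    (S ^ n) x = ∑ k ∈ Finset.range (n + 1), cf D a n k • (T ^ k) x := by
  induction n with
  | zero => simp [cf]
  | succ n ih =>
    rw [pow_succ', Module.End.mul_apply, ih, hS, map_sum, Finset.sum_range_succ' _ (n + 1)]
    simp only [hT, cf, mul_smul, ← Finset.smul_sum, ← smul_add, add_smul, Finset.sum_add_distrib]
    congr 1
    have h1 : ∑ k ∈ Finset.range (n + 1), D (cf D a n k) • (T ^ k) x =
        ∑ k ∈ Finset.range (n + 1), D (cf D a n (k + 1)) • (T ^ (k + 1)) x
          + D (cf D a n 0) • (T ^ 0) x := by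
      rw [← Finset.sum_range_succ' (fun k => D (cf D a n k) • (T ^ k) x),
        Finset.sum_range_succ _ (n + 1), cf_gt D a n (n + 1) (by omega)]
      simp
    rw [h1]
    simp only [pow_succ' T, Module.End.mul_apply]
    abel

/-- In characteristic `p`, the `p`-th iterate satisfies the Leibniz rule. -/
theorem pow_p_leibniz (p : ℕ) (hp : p.Prime) [CharP A p] (f g : A) :
    ((D : A →ₗ[R] A) ^ p) (f * g) =
      f * ((D : A →ₗ[R] A) ^ p) g + ((D : A →ₗ[R] A) ^ p) f * g := by
  let E : Module.End R A := (D : A →ₗ[R] A)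
  let l : Module.End R (Module.End R A) := LinearMap.mulLeft R E
  let r : Module.End R (Module.End R A) := LinearMap.mulRight R E
  let d : Module.End R (Module.End R A) :=
    { toFun := fun w => E * w - w * E
      map_add' := fun v w => by rw [mul_add, add_mul]; abel
      map_smul' := fun t w => by
        rw [mul_smul_comm, smul_mul_assoc, RingHom.id_apply, smul_sub] }
  have hd : ∀ w, d w = E * w - w * E := fun _ => rfl
  have hrw : ∀ w, r w = w * E := fun _ => rfl
  have hlw : ∀ w, l w = E * w := fun _ => rfl
  have hsum : d + r = l := by
    refine LinearMap.ext fun w => ?_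
    rw [LinearMap.add_apply, hd, hrw, hlw, sub_add_cancel]
  have hc : Commute d r := by
    refine LinearMap.ext fun w => ?_
    rw [Module.End.mul_apply, Module.End.mul_apply, hd, hrw, hrw, hd, sub_mul, mul_assoc, mul_assoc]
  obtain ⟨s, hs⟩ := hc.exists_add_pow_prime_eq hp
  have had : ∀ (n : ℕ), (d ^ n) (LinearMap.mulLeft R f) = LinearMap.mulLeft R ((E ^ n) f) := by
    intro n
    induction n with
    | zero => simp
    | succ n ih =>
      rw [pow_succ', Module.End.mul_apply, ih, pow_succ' E, hd]
      ext y
      simp only [LinearMap.sub_apply, LinearMap.mulLeft_apply, LinearMap.mulRight_apply,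
        Module.End.mul_apply, E, Derivation.coeFn_coe, Derivation.leibniz, smul_eq_mul]
      ring
  rw [hsum] at hs
  have h := congrArg (fun φ : Module.End R (Module.End R A) => φ (LinearMap.mulLeft R f) g) hs
  have hl : l ^ p = LinearMap.mulLeft R (E ^ p) := LinearMap.pow_mulLeft R _ E p
  have hr : r ^ p = LinearMap.mulRight R (E ^ p) := LinearMap.pow_mulRight R _ E p
  have hz : ∀ w : Module.End R A, ((p : Module.End R (Module.End R A)) w) g = 0 := by
    intro w
    rw [Module.End.natCast_apply, LinearMap.smul_apply, nsmul_eq_mul, CharP.cast_eq_zero, zero_mul]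
  rw [hl, hr, mul_assoc, mul_assoc] at h
  simp only [LinearMap.add_apply, had, Module.End.mul_apply (p : Module.End R (Module.End R A)),
    hz, LinearMap.mulLeft_apply, LinearMap.mulRight_apply, Module.End.mul_apply, add_zero] at h
  rw [add_comm]
  exact h

/-- `D` on coefficients plus `d/dX`. -/
noncomputable def ext : Derivation R A[X] A[X] :=
  (PolynomialModule.equivPolynomialSelf (R := A)).toLinearMap.compDer D.mapCoeffs
    + (Polynomial.derivative' (R := A)).restrictScalars R

theorem ext_C (b : A) : ext D (C b) = C (D b) := by
  simp [ext, derivative']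

theorem ext_X : ext D X = 1 := by
  simp [ext, derivative']

theorem ext_smul (b : A) (f : A[X]) : ext D (b • f) = D b • f + b • ext D f := by
  rw [smul_eq_C_mul, Derivation.leibniz, ext_C, smul_eq_C_mul, smul_eq_C_mul, smul_eq_mul,
    smul_eq_mul]
  ring

theorem ext_pow_X (j k : ℕ) : (((ext D : A[X] →ₗ[R] A[X])) ^ k) (X ^ j) =
    (j.descFactorial k : A[X]) * X ^ (j - k) := by
  induction k with
  | zero => simp
  | succ k ih =>
    rw [pow_succ', Module.End.mul_apply, ih, Derivation.coeFn_coe, Derivation.leibniz,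
      Derivation.leibniz_pow, ext_X, Derivation.map_natCast, Nat.descFactorial_succ]
    simp [Nat.sub_sub]
    ring

theorem cf_mid (p : ℕ) (hp : p.Prime) [CharP A p] (j : ℕ) (h1 : 2 ≤ j) (h2 : j < p) :
    cf D a p j = 0 := by
  let E : Derivation R A[X] A[X] := C a • ext D
  have key := pow_eq_sum D a (E : A[X] →ₗ[R] A[X]) (ext D : A[X] →ₗ[R] A[X])
    (fun x => by simp [E, smul_eq_C_mul]) (ext_smul D) p (X ^ j)
  obtain ⟨i, rfl⟩ : ∃ i, j = i + 2 := ⟨j - 2, by omega⟩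
  have hl : (((E : A[X] →ₗ[R] A[X]) ^ p) (X ^ (i + 2))).coeff 0 = 0 := by
    rw [show (X : A[X]) ^ (i + 2) = X * (X * X ^ i) by ring, pow_p_leibniz E p hp,
      pow_p_leibniz E p hp]
    simp
  rw [key, finsetSum_coeff, Finset.sum_eq_single (i + 2)] at hl
  · rw [ext_pow_X, Nat.descFactorial_self, Nat.sub_self, pow_zero, mul_one, coeff_smul,
      ← C_eq_natCast, coeff_C_zero, smul_eq_mul] at hl
    have hu : IsUnit (((i + 2).factorial : ℕ) : A) := by
      have := (CharP.isUnit_natCast_iff (R := A) hp (n := (i+2).factorial)).2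
        (by rw [hp.dvd_factorial]; omega)
      exact this
    exact (hu.mul_left_eq_zero).1 hl
  · intro k _ hk
    rw [ext_pow_X]
    rcases lt_or_gt_of_ne hk with h | h
    · have : i + 2 - k ≠ 0 := by omega
      simp [coeff_X_pow, mul_coeff_zero, this.symm]
    · simp [Nat.descFactorial_of_lt h]
  · intro h; simp at h; omega

theorem hochschild (p : ℕ) (hp : p.Prime) [CharP A p]
    {N : Type*} [AddCommGroup N] [Module R N] [Module A N]
    (S T : Module.End R N) (hS : ∀ x, S x = a • T x)
    (hT : ∀ (b : A) (x : N), T (b • x) = D b • x + b • T x) (x : N) :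
    (S ^ p) x = a ^ p • (T ^ p) x + cf D a p 1 • T x := by
  have h2 := hp.two_le
  rw [pow_eq_sum D a S T hS hT, Finset.sum_range_succ, cf_self, add_comm,
    Finset.sum_eq_single 1]
  · simp
  · intro k hk hk1
    obtain _ | k := k
    · obtain ⟨q, rfl⟩ : ∃ q, p = q + 1 := ⟨p - 1, by omega⟩
      rw [cf_zero, zero_smul]
    · rw [cf_mid D a p hp _ (by omega) (by simpa using hk), zero_smul]
  · intro h; simp at h; omega
end
end PCurv

/-- With `∇` a connection on an `A`-module `M` in
characteristic `p`, and `ψ(D) = (∇_D)^p - ∇_{D^[p]}` the `p`-curvature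
(where `D^[p]` denotes the derivation whose underlying map is the `p`-fold
composite of `D`), one has `ψ(a • D) = a^p • ψ(D)` for every `a ∈ A`. -/
theorem statement7 {R A M : Type*} [CommRing R] [CommRing A] [Algebra R A]
    [AddCommGroup M] [Module R M] [Module A M] [IsScalarTower R A M]
    (p : ℕ) (hp : p.Prime) [CharP A p]
    (nabla : Derivation R A A → Module.End R M)
    (hadd : ∀ D E : Derivation R A A, nabla (D + E) = nabla D + nabla E)
    (hsmul : ∀ (a : A) (D : Derivation R A A) (m : M),
      nabla (a • D) m = a • nabla D m)
    (hleib : ∀ (D : Derivation R A A) (a : A) (m : M),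
      nabla D (a • m) = (D a) • m + a • nabla D m)
    (a : A) (D Dp aDp : Derivation R A A)
    (hDp : ∀ x : A, Dp x = (((D : A →ₗ[R] A)) ^ p) x)
    (haDp : ∀ x : A, aDp x = ((((a • D : Derivation R A A) : A →ₗ[R] A)) ^ p) x)
    (m : M) :
    ((nabla (a • D)) ^ p - nabla aDp) m =
      a ^ p • (((nabla D) ^ p - nabla Dp) m) := by
  have h1 := PCurv.hochschild D a p hp (nabla (a • D)) (nabla D) (hsmul a D) (hleib D) m
  have h2 : aDp = a ^ p • Dp + PCurv.cf D a p 1 • D := by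
    ext x
    have := PCurv.hochschild D a p hp ((a • D : Derivation R A A) : A →ₗ[R] A) (D : A →ₗ[R] A)
      (fun x => by simp) (fun b x => by simp [mul_comm, add_comm]) x
    rw [haDp, this]
    simp [hDp]
  rw [LinearMap.sub_apply, LinearMap.sub_apply, h1, h2, hadd, LinearMap.add_apply, hsmul, hsmul,
    smul_sub]
  abel
end

section
/- Let p be a prime, R a commutative ring, A a commutative R-algebra of characteristic p, and M an A-module with a connection ∇ (a map from R-derivations of A to R-linear endomorphisms of M that is additive in D, A-linear in D, and satisfies the Leibniz rule). Assume ∇ is integrable: ∇_D ∘ ∇_E − ∇_E ∘ ∇_D = ∇_{⁅D,E⁆} for all R-derivations D, E of A, where ⁅D,E⁆ = D∘E − E∘D is the commutator derivation. Then the p-curvature ψ(D) := (∇_D)^p − ∇_{D^{[p]}} is additive in D: ψ(D+E) = ψ(D) + ψ(E) for all R-derivations D, E of A. -/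
open Polynomial in
theorem aux_choose (p : ℕ) (hp : p.Prime) (j : ℕ) (hj : j < p) :
    (p : ℤ) ∣ ((p - 1).choose j : ℤ) - (-1) ^ j := by
  induction j with
  | zero => simp
  | succ k ih =>
    have h1 := ih (by omega)
    have h2 : (p : ℤ) ∣ (p.choose (k + 1) : ℤ) :=
      Int.natCast_dvd_natCast.mpr (hp.dvd_choose_self (by omega) hj)
    obtain ⟨q, rfl⟩ : ∃ q, p = q + 1 := ⟨p - 1, by omega⟩
    rw [Nat.choose_succ_succ'] at h2
    rw [Nat.add_sub_cancel] at h1 ⊢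
    have h3 := dvd_sub h2 h1
    have e : ((q.choose (k + 1) : ℕ) : ℤ) - (-1) ^ (k + 1) =
        ((q.choose k + q.choose (k + 1) : ℕ) : ℤ) - ((q.choose k : ℤ) - (-1) ^ k) := by
      rw [Nat.cast_add, pow_succ]
      ring
    rw [e]
    exact h3

theorem aux_pow {B : Type*} [Ring B] (p : ℕ) (hp : p.Prime) (h0 : (p : B) = 0)
    (u v : B) (h : Commute u v) :
    (u - v) ^ (p - 1) = ∑ j ∈ Finset.range p, u ^ (p - 1 - j) * v ^ j := by
  have hv : Commute (-v) u := h.symm.neg_left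
  rw [sub_eq_neg_add, hv.add_pow, Nat.sub_add_cancel hp.one_le]
  refine Finset.sum_congr rfl fun j hj => ?_
  obtain ⟨c, hc⟩ := aux_choose p hp j (Finset.mem_range.mp hj)
  have h1 : (((p - 1).choose j : ℕ) : B) = (-1) ^ j := by
    have := congrArg (Int.cast : ℤ → B) hc
    push_cast at this
    rw [h0, zero_mul, sub_eq_zero] at this
    exact this
  rw [h1, neg_pow v j, mul_assoc, mul_assoc]
  have h2 : Commute ((-1 : B) ^ j) (v ^ j * (u ^ (p - 1 - j) )) :=
    ((Commute.one_left _).neg_left).pow_left j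
  rw [← mul_assoc (v ^ j), ← h2.eq, ← mul_assoc,
    ← (Commute.refl (-1 : B)).mul_pow, neg_mul_neg, one_mul, one_pow, one_mul]
  exact ((h.pow_pow _ _).eq).symm

open Polynomial in
theorem aux_deriv {S : Type*} [Ring S] (f : S[X]) (n : ℕ) :
    derivative (f ^ n) = ∑ j ∈ Finset.range n, f ^ (n - 1 - j) * derivative f * f ^ j := by
  induction n with
  | zero => simp
  | succ n ih =>
    rw [pow_succ', derivative_mul, ih, Finset.sum_range_succ, Finset.mul_sum]
    simp only [Nat.add_sub_cancel, Nat.sub_self, pow_zero, one_mul]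
    rw [add_comm]
    congr 1
    refine Finset.sum_congr rfl fun j hj => ?_
    have hj := Finset.mem_range.mp hj
    rw [← mul_assoc, ← mul_assoc, ← pow_succ']
    congr 3
    omega

theorem aux_ad {B : Type*} [Ring B] (p : ℕ) (hp : p.Prime) (h0 : (p : B) = 0) (a x : B) :
    ((LinearMap.mulLeft ℤ a - LinearMap.mulRight ℤ a) ^ (p - 1)) x =
      ∑ j ∈ Finset.range p, a ^ (p - 1 - j) * x * a ^ j := by
  rw [aux_pow p hp _ _ _ (LinearMap.commute_mulLeft_right (R := ℤ) a a)]
  · simp [LinearMap.sum_apply, LinearMap.pow_mulLeft, LinearMap.pow_mulRight, mul_assoc]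
  · ext z
    have : ((p : Module.End ℤ B)) z = p • z := by
      rw [← nsmul_one, LinearMap.smul_apply]; rfl
    rw [this, nsmul_eq_mul, h0]
    simp

open Polynomial in
theorem aux_jacobson {S : Type*} [Ring S] (p : ℕ) (hp : p.Prime) (h0 : (p : S) = 0)
    (G : AddSubgroup S) (hG : ∀ a ∈ G, ∀ b ∈ G, a * b - b * a ∈ G)
    (x y : S) (hx : x ∈ G) (hy : y ∈ G) :
    (x + y) ^ p - x ^ p - y ^ p ∈ G := by
  set f : S[X] := C x * X + C y with hf
  have h0' : (p : S[X]) = 0 := by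
    rw [← C_eq_natCast, h0, C_0]
  have hd : derivative f = C x := by simp [hf]
  have key : ∀ n k, ((((LinearMap.mulLeft ℤ f - LinearMap.mulRight ℤ f) ^ n) (C x)).coeff k) ∈ G := by
    intro n
    induction n with
    | zero =>
      intro k
      simp only [pow_zero, Module.End.one_apply, coeff_C]
      split_ifs
      · exact hx
      · exact G.zero_mem
    | succ n ih =>
      intro k
      rw [pow_succ', Module.End.mul_apply]
      generalize ((LinearMap.mulLeft ℤ f - LinearMap.mulRight ℤ f) ^ n) (C x) = g at ih
      simp only [LinearMap.sub_apply, LinearMap.mulLeft_apply, LinearMap.mulRight_apply, hf,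
        add_mul, mul_add, coeff_sub, coeff_add, coeff_C_mul, coeff_mul_C]
      have e1 : C x * X * g = C x * (g * X) := by rw [mul_assoc, X_mul]
      have e2 : g * (C x * X) = g * C x * X := by rw [mul_assoc]
      rw [e1, e2]
      cases k with
      | zero =>
        simp only [coeff_C_mul, mul_coeff_zero, coeff_X_zero, mul_zero, zero_add]
        exact hG _ hy _ (ih 0)
      | succ k =>
        simp only [coeff_C_mul, coeff_mul_X, coeff_mul_C]
        have := G.add_mem (hG _ hx _ (ih k)) (hG _ hy _ (ih (k + 1)))
        convert this using 1
        abel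
  have hs : ∀ i, 0 < i → i < p → (f ^ p).coeff i ∈ G := by
    intro i hi hip
    obtain ⟨k, rfl⟩ : ∃ k, i = k + 1 := ⟨i - 1, by omega⟩
    have h1 : (f ^ p).coeff (k + 1) * ((k : S) + 1) ∈ G := by
      rw [← coeff_derivative, aux_deriv, hd, ← aux_ad p hp h0']
      exact key _ _
    have hcop : IsCoprime ((k + 1 : ℕ) : ℤ) (p : ℤ) :=
      Nat.isCoprime_iff_coprime.mpr (Nat.coprime_of_lt_prime (by omega) hip hp).symm
    obtain ⟨u, v, huv⟩ := hcop
    have h2 := G.zsmul_mem h1 u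
    convert h2 using 1
    have h3 := congrArg (Int.cast : ℤ → S) huv
    push_cast at h3
    rw [h0, mul_zero, add_zero] at h3
    rw [zsmul_eq_mul, ← mul_assoc, (Int.cast_commute u _).eq, mul_assoc, h3, mul_one]
  have hdeg : f.natDegree ≤ 1 := natDegree_linear_le
  have hdegp : (f ^ p).natDegree < p + 1 := by
    have := natDegree_pow_le_of_le p hdeg
    omega
  have ev : (f ^ p).eval 1 = (x + y) ^ p := by
    let φ := eval₂RingHom' (RingHom.id S) 1 (fun a => Commute.one_right _)
    have h1 : ∀ g : S[X], g.eval 1 = φ g := fun g => rfl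
    rw [h1, map_pow, ← h1]
    simp [hf]
  have c0 : (f ^ p).coeff 0 = y ^ p := by
    rw [← constantCoeff_apply, map_pow]
    simp [hf]
  have cp : (f ^ p).coeff p = x ^ p := by
    have := coeff_pow_of_natDegree_le (m := p) hdeg
    rw [mul_one] at this
    rw [this]
    simp [hf]
  rw [eval_eq_sum_range' hdegp] at ev
  simp only [one_pow, mul_one] at ev
  rw [Finset.sum_range_succ, cp, Finset.range_eq_Ico,
    Finset.sum_eq_sum_Ico_succ_bot hp.pos, c0] at ev
  rw [← ev]
  have : y ^ p + ∑ k ∈ Finset.Ico (0 + 1) p, (f ^ p).coeff k + x ^ p - x ^ p - y ^ p =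
      ∑ k ∈ Finset.Ico (0 + 1) p, (f ^ p).coeff k := by abel
  rw [this]
  refine G.sum_mem fun i hi => ?_
  rw [Finset.mem_Ico] at hi
  exact hs i (by omega) hi.2


/-- With `∇` an *integrable* connection on an `A`-module `M`
in characteristic `p` (`∇_D ∘ ∇_E - ∇_E ∘ ∇_D = ∇_⁅D,E⁆` for all derivations
`D, E`), the `p`-curvature `ψ(D) = (∇_D)^p - ∇_{D^[p]}` is additive in `D`:
`ψ(D + E) = ψ(D) + ψ(E)`. -/
theorem statement8 {R A M : Type*} [CommRing R] [CommRing A] [Algebra R A]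
    [AddCommGroup M] [Module R M] [Module A M] [IsScalarTower R A M]
    (p : ℕ) (hp : p.Prime) [CharP A p]
    (nabla : Derivation R A A → Module.End R M)
    (hadd : ∀ D E : Derivation R A A, nabla (D + E) = nabla D + nabla E)
    (hsmul : ∀ (a : A) (D : Derivation R A A) (m : M),
      nabla (a • D) m = a • nabla D m)
    (hleib : ∀ (D : Derivation R A A) (a : A) (m : M),
      nabla D (a • m) = (D a) • m + a • nabla D m)
    (hint : ∀ D E : Derivation R A A,
      nabla D * nabla E - nabla E * nabla D = nabla ⁅D, E⁆)
    (D E Dp Ep DEp : Derivation R A A)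
    (hDp : ∀ x : A, Dp x = (((D : A →ₗ[R] A)) ^ p) x)
    (hEp : ∀ x : A, Ep x = (((E : A →ₗ[R] A)) ^ p) x)
    (hDEp : ∀ x : A, DEp x = ((((D + E : Derivation R A A) : A →ₗ[R] A)) ^ p) x) :
    (nabla (D + E)) ^ p - nabla DEp =
      ((nabla D) ^ p - nabla Dp) + ((nabla E) ^ p - nabla Ep) := by

  let N : Derivation R A A →+ Module.End R M := AddMonoidHom.mk' nabla hadd
  let ι : Derivation R A A →+ Module.End R A × Module.End R M :=
    AddMonoidHom.mk' (fun F => ((F : A →ₗ[R] A), nabla F)) (by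
      intro F F'
      ext1
      · simp
      · exact hadd F F')
  have h0 : ((p : ℕ) : Module.End R A × Module.End R M) = 0 := by
    ext z
    · change ((p : Module.End R A)) z = 0
      rw [← nsmul_one, LinearMap.smul_apply, Module.End.one_apply, nsmul_eq_mul,
        CharP.cast_eq_zero, zero_mul]
    · change ((p : Module.End R M)) z = 0
      rw [← nsmul_one, LinearMap.smul_apply, Module.End.one_apply, ← Nat.cast_smul_eq_nsmul A,
        CharP.cast_eq_zero, zero_smul]
  have hG : ∀ a ∈ ι.range, ∀ b ∈ ι.range, a * b - b * a ∈ ι.range := by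
    rintro _ ⟨F, rfl⟩ _ ⟨F', rfl⟩
    refine ⟨⁅F, F'⁆, ?_⟩
    ext1
    · change ((⁅F, F'⁆ : Derivation R A A) : A →ₗ[R] A) = _
      rw [Derivation.commutator_coe_linear_map]
      rfl
    · exact (hint F F').symm
  obtain ⟨F, hF⟩ := aux_jacobson p hp h0 ι.range hG (ι D) (ι E) ⟨D, rfl⟩ ⟨E, rfl⟩
  rw [← map_add] at hF
  have hF1 : (F : A →ₗ[R] A) = ((D + E : Derivation R A A) : A →ₗ[R] A) ^ p
      - (D : A →ₗ[R] A) ^ p - (E : A →ₗ[R] A) ^ p := congrArg Prod.fst hF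
  have hF2 : nabla F = nabla (D + E) ^ p - nabla D ^ p - nabla E ^ p := congrArg Prod.snd hF
  have hFe : F = DEp - Dp - Ep := by
    ext z
    rw [Derivation.sub_apply, Derivation.sub_apply, hDp, hEp, hDEp]
    exact LinearMap.congr_fun hF1 z
  have hN : nabla F = nabla DEp - nabla Dp - nabla Ep := by
    rw [hFe]
    change N (DEp - Dp - Ep) = N DEp - N Dp - N Ep
    rw [map_sub, map_sub]
  rw [hF2] at hN
  have h5 : nabla (D + E) ^ p = nabla DEp - nabla Dp - nabla Ep + nabla D ^ p + nabla E ^ p := by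
    rw [← hN]; abel
  rw [h5]; abel
end
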